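/- arXiv:1612.03351 — 2 statements merged into one kernel-verified Lean document; each statement's English description precedes it below -/
import Mathlib

section
/- For every τ ∈ H, −i · ∑_{m ∈ ℤ+1/2} m · e(m²τ/2 + m/2) = e(τ/8) · ∏_{n=1}^{∞} (1 − e(nτ))³; i.e. the theta series η³(τ) := −i ∑_{m ∈ ℤ+1/2} m e(m²τ/2 + m/2) equals q^{1/8} ∏_{n≥1} (1 − qⁿ)³ with q = e(τ). -/
open Complex MeasureTheory
open scoped Classical

noncomputable section

/-- `e(a) = exp(2πia)`. -/
def e (a : ℂ) : ℂ := Complex.exp (2 * (Real.pi : ℂ) * Complex.I * a)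

/-- The Fourier transform `F(g)(x) = ∫ g(w) e(wx) dw`. -/
def fourierT (g : ℝ → ℂ) (x : ℝ) : ℂ := ∫ w : ℝ, g w * e ((w * x : ℝ))

/-- The operator `E_σ(f)(x) = e(x²σ/2) ∫_0^x e(-w²σ/2) f(w) dw`. -/
def Eop (σ : ℂ) (f : ℝ → ℂ) (x : ℝ) : ℂ :=
  e ((x : ℂ)^2 * σ / 2) * ∫ w in (0:ℝ)..x, e (-(w : ℂ)^2 * σ / 2) * f w

/-- `ω_τ(x) = e(-x²τ/2) ∑_{m ∈ ℤ+1/2, m ≥ |x|} e(m²τ/2 + m/2)`. -/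
def omega (τ : ℂ) (x : ℝ) : ℂ :=
  e (-(x : ℂ)^2 * τ / 2) *
    ∑' m : ℤ, if |x| ≤ (m : ℝ) + 1/2 then
      e (((m : ℂ) + 1/2)^2 / 2 * τ + ((m : ℂ) + 1/2) / 2) else 0

/-- `η³(τ) = -i ∑_{m ∈ ℤ+1/2} m e(m²τ/2 + m/2)`. -/
def eta3 (τ : ℂ) : ℂ :=
  -Complex.I * ∑' m : ℤ, ((m : ℂ) + 1/2) * e (((m : ℂ) + 1/2)^2 / 2 * τ + ((m : ℂ) + 1/2) / 2)

/-- The complementary error function. -/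
def erfc (x : ℝ) : ℝ := (2 / Real.sqrt Real.pi) * ∫ t in Set.Ioi x, Real.exp (-t^2)

/-- `g⁺_τ`. -/
def gplus (τ : ℂ) (x : ℝ) : ℂ :=
  e (-(x : ℂ)^2 * τ / 2) * ((Real.sign x : ℂ) / (Complex.I * eta3 τ)) *
    ∑' m : ℤ, if |x| < (m : ℝ) + 1/2 then
      (((m : ℝ) + 1/2 - |x| : ℝ) : ℂ) * e (((m : ℂ) + 1/2)^2 / 2 * τ + ((m : ℂ) + 1/2) / 2)
    else 0

/-- `g*_τ`. -/
def gstar (τ : ℂ) (x : ℝ) : ℂ :=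
  e (-(x : ℂ)^2 * τ / 2) * ((Real.sign x : ℂ) / 2) *
    (erfc (Real.sqrt (2 * Real.pi * τ.im) * |x|) : ℂ)

/-- `g_τ = g⁺_τ - g*_τ`. -/
def gfun (τ : ℂ) (x : ℝ) : ℂ := gplus τ x - gstar τ x

/-- The operator `ξ_k f = 2i v^k conj(∂f/∂τ̄)`, with `∂/∂τ̄ = (1/2)(∂/∂u + i ∂/∂v)`. -/
def xi (k : ℝ) (f : ℂ → ℂ) (τ : ℂ) : ℂ :=
  2 * Complex.I * ((τ.im ^ k : ℝ) : ℂ) *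
    (starRingEnd ℂ) ((1/2 : ℂ) * (fderiv ℝ f τ 1 + Complex.I * fderiv ℝ f τ Complex.I))

/-- Sum of divisors function `σ₁`. -/
def sigma1 (n : ℕ) : ℕ := ∑ d ∈ Nat.divisors n, d

/-- The weight 2 Eisenstein series `E₂`. -/
def E2 (τ : ℂ) : ℂ := 1 - 24 * ∑' n : ℕ, (sigma1 (n+1) : ℂ) * e ((n + 1 : ℂ) * τ)

/-- `ϑ̃_{N,h}`. -/
def tvtheta (N : ℕ) (h : ℝ) (τ : ℂ) : ℂ :=
  (if ∃ m : ℤ, h = (m : ℝ) + 1/2 then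
      e ((h : ℂ) / 2) * E2 τ / (12 * (N : ℂ) * Complex.I * eta3 τ) else 0)
  + ∑' n : ℤ, gfun τ ((N : ℝ) * n + h)

/-- The Schwartz function `φ_τ(x,y) = √(2v)·x·e(x²τ/2 - y²τ̄/2)`. -/
def Phi (τ : ℂ) (x y : ℝ) : ℂ :=
  (Real.sqrt (2 * τ.im) : ℂ) * (x : ℂ) *
    e ((x : ℂ)^2 * τ / 2 - (y : ℂ)^2 * (starRingEnd ℂ) τ / 2)

/-- The signature (1,1) bilinear form `B((a₁,a₂),(b₁,b₂)) = a₁b₂ + a₂b₁`. -/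
def Bform (a b : ℝ × ℝ) : ℝ := a.1 * b.2 + a.2 * b.1

/-- `Z⁺_t = (t/√2, t⁻¹/√2)`. -/
def Zp (t : ℝ) : ℝ × ℝ := (t / Real.sqrt 2, t⁻¹ / Real.sqrt 2)

/-- `Z⁻_t = (t/√2, -t⁻¹/√2)`. -/
def Zm (t : ℝ) : ℝ × ℝ := (t / Real.sqrt 2, -t⁻¹ / Real.sqrt 2)

end

def Jgb (q : ℂ) : ℕ → ℕ → ℂ
  | _, 0 => 1
  | 0, _ + 1 => 0
  | n + 1, k + 1 => Jgb q n (k + 1) + q ^ (n - k) * Jgb q n k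

def JQ (q : ℂ) (n : ℕ) : ℂ := ∏ i ∈ Finset.range n, (1 - q ^ (i + 1))

theorem JQ_succ (q : ℂ) (n : ℕ) : JQ q (n + 1) = JQ q n * (1 - q ^ (n + 1)) :=
  Finset.prod_range_succ _ _

theorem Jgb_zero (q : ℂ) (n : ℕ) : Jgb q n 0 = 1 := by cases n <;> simp [Jgb]

theorem Jgb_gt (q : ℂ) (n k : ℕ) (h : n < k) : Jgb q n k = 0 := by
  induction n generalizing k with
  | zero => obtain ⟨k, rfl⟩ := Nat.exists_eq_succ_of_ne_zero h.ne'; simp [Jgb]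
  | succ n ih =>
    obtain ⟨k, rfl⟩ := Nat.exists_eq_succ_of_ne_zero (show k ≠ 0 by omega)
    simp [Jgb, ih (k+1) (by omega), ih k (by omega)]

theorem Jgb_mul (q : ℂ) (n k l : ℕ) (h : k + l = n) : Jgb q n k * JQ q k * JQ q l = JQ q n := by
  induction n generalizing k l with
  | zero =>
    obtain rfl : k = 0 := by omega
    obtain rfl : l = 0 := by omega
    simp [Jgb, JQ]
  | succ n ih =>
    rcases k with _ | k
    · obtain rfl : l = n + 1 := by omega
      simp [Jgb_zero, JQ]
    · rcases l with _ | l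
      · obtain rfl : k = n := by omega
        have := ih k 0 (by omega)
        simp only [Jgb, Jgb_gt q k (k+1) (by omega), JQ_succ] at *
        simp
        linear_combination (1 - q^(k+1)) * this
      · obtain rfl : n = k + 1 + l := by omega
        have h1 := ih (k+1) l (by omega)
        have h2 := ih k (l+1) (by omega)
        have : k + 1 + l - k = l + 1 := by omega
        simp only [Jgb, this]
        rw [JQ_succ q (k+1+l), JQ_succ q l]
        rw [JQ_succ q l] at h2
        rw [JQ_succ q k] at *
        linear_combination (1 - q^(l+1)) * h1 + q^(l+1) * (1-q^(k+1)) * h2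

theorem J_qbinom (q x : ℂ) (n : ℕ) : ∏ k ∈ Finset.range n, (1 + x * q ^ k) =
    ∑ k ∈ Finset.range (n + 1), q ^ (k.choose 2) * Jgb q n k * x ^ k := by
  induction n with
  | zero => simp [Jgb]
  | succ n ih =>
    rw [Finset.prod_range_succ, ih, Finset.sum_range_succ' _ (n+1)]
    have key : ∀ k ∈ Finset.range (n+1), q ^ ((k+1).choose 2) * Jgb q (n+1) (k+1) * x ^ (k+1) =
       q ^ ((k+1).choose 2) * Jgb q n (k+1) * x ^ (k+1) +
       (q ^ (k.choose 2) * Jgb q n k * x ^ k) * (x * q ^ n) := by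
      intro k hk
      have hk : k ≤ n := by simpa [Nat.lt_succ_iff] using hk
      have h1 : (k+1).choose 2 = k + k.choose 2 := by
        rw [Nat.choose_succ_succ' k 1]; simp
      have h2 : q ^ n = q ^ k * q ^ (n-k) := by rw [← pow_add]; congr 1; omega
      rw [Jgb, h1, h2]; ring
    rw [Finset.sum_congr rfl key, Finset.sum_add_distrib, ← Finset.sum_mul]
    have h3 := Finset.sum_range_succ' (fun k => q ^ (k.choose 2) * Jgb q n k * x ^ k) (n+1)
    rw [Finset.sum_range_succ] at h3
    rw [Jgb_gt q n (n+1) (by omega)] at h3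
    simp only [Jgb_zero] at *
    linear_combination h3

theorem J_choose1 (N j : ℕ) : (N+1+j).choose 2 + (N+1).choose 2 = (j+1).choose 2 + N * (N+1+j) := by
  have : (((N+1+j).choose 2 + (N+1).choose 2 : ℕ) : ℚ) = ((j+1).choose 2 + N * (N+1+j) : ℕ) := by
    push_cast [Nat.cast_choose_two]; ring
  exact_mod_cast this

theorem J_choose2 (l j : ℕ) : l.choose 2 + (j+l+1).choose 2 = (j+1).choose 2 + (j+l) * l := by
  have : ((l.choose 2 + (j+l+1).choose 2 : ℕ) : ℚ) = ((j+1).choose 2 + (j+l) * l : ℕ) := by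
    push_cast [Nat.cast_choose_two]; ring
  exact_mod_cast this

/-- evaluated derivative -/
theorem J_deriv (q x : ℂ) (N : ℕ) (hx : x * q ^ N = -1) :
    ∑ k ∈ Finset.range (2 * N + 2), ((k:ℂ) - N - 1/2) * (q ^ (k.choose 2) * Jgb q (2*N+1) k * x ^ k)
     = - ((∏ k ∈ Finset.range N, (1 + x * q ^ k)) * ∏ k ∈ Finset.range N, (1 + x * q ^ (N+1+k))) := by
  have hP : ∀ y : ℂ, ∑ k ∈ Finset.range (2 * N + 2), q ^ (k.choose 2) * Jgb q (2*N+1) k * y ^ k =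
      (1 + y * q ^ N) * ((∏ k ∈ Finset.range N, (1 + y * q ^ k)) *
        ∏ k ∈ Finset.range N, (1 + y * q ^ (N+1+k))) := by
    intro y
    rw [← J_qbinom q y (2*N+1), show 2 * N + 1 = N + 1 + N by ring, Finset.prod_range_add,
      Finset.prod_range_succ]
    ring
  set R : ℂ → ℂ := fun y => ((∏ k ∈ Finset.range N, (1 + y * q ^ k)) *
        ∏ k ∈ Finset.range N, (1 + y * q ^ (N+1+k))) with hR
  have hRd : Differentiable ℂ R := by rw [hR]; fun_prop
  have h1 : HasDerivAt (fun y => (1 + y * q ^ N) * R y) (q ^ N * R x) x := by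
    have := (((hasDerivAt_id x).mul_const (q ^ N)).const_add 1).mul (hRd x).hasDerivAt
    have e1 : q ^ N * R x = 1 * q ^ N * R x + (1 + x * q ^ N) * deriv R x := by rw [hx]; ring
    rw [e1]
    exact this
  have h2 : HasDerivAt (fun y => ∑ k ∈ Finset.range (2 * N + 2), q ^ (k.choose 2) * Jgb q (2*N+1) k * y ^ k)
     (∑ k ∈ Finset.range (2 * N + 2), q ^ (k.choose 2) * Jgb q (2*N+1) k * (k * x ^ (k-1))) x :=
    HasDerivAt.fun_sum fun k _ => (hasDerivAt_pow k x).const_mul _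
  have h3 : (fun y => ∑ k ∈ Finset.range (2 * N + 2), q ^ (k.choose 2) * Jgb q (2*N+1) k * y ^ k) =
    (fun y => (1 + y * q ^ N) * R y) := funext hP
  rw [h3] at h2
  have h4 := h2.unique h1
  have h5 := hP x
  rw [hx] at h5
  have h6 : ∑ k ∈ Finset.range (2 * N + 2), (k:ℂ) * (q ^ (k.choose 2) * Jgb q (2*N+1) k * x ^ k) = - R x := by
    have : - R x = x * (q ^ N * R x) := by rw [← mul_assoc, hx]; ring
    rw [this, ← h4, Finset.mul_sum]
    refine Finset.sum_congr rfl fun k _ => ?_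
    rcases k with _ | k
    · simp
    · simp [pow_succ]; ring
  have h7 : ∀ k ∈ Finset.range (2*N+2), ((k:ℂ) - N - 1/2) * (q ^ (k.choose 2) * Jgb q (2*N+1) k * x ^ k) =
     (k:ℂ) * (q ^ (k.choose 2) * Jgb q (2*N+1) k * x ^ k) - (N + 1/2) * (q ^ (k.choose 2) * Jgb q (2*N+1) k * x ^ k) := by
    intros; ring
  rw [Finset.sum_congr rfl h7, Finset.sum_sub_distrib, ← Finset.mul_sum, h5, h6]
  simp [hR]

theorem J_prod (q : ℂ) (hq : q ≠ 0) (N : ℕ) :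
   ∏ k ∈ Finset.range N, (1 + (-(q^N)⁻¹) * q ^ k) = (-1)^N * (q ^ ((N+1).choose 2))⁻¹ * JQ q N := by
  rw [← Finset.prod_range_reflect]
  have : ∀ k ∈ Finset.range N, (1 + (-(q^N)⁻¹) * q ^ (N - 1 - k)) = (-1) * (q^(k+1))⁻¹ * (1 - q^(k+1)) := by
    intro k hk
    have hk := Finset.mem_range.1 hk
    have : q ^ N = q ^ (N-1-k) * q ^ (k+1) := by rw [← pow_add]; congr 1; omega
    rw [this]
    field_simp
    ring
  rw [Finset.prod_congr rfl this, Finset.prod_mul_distrib, Finset.prod_mul_distrib, JQ]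
  congr 2
  · simp
  · rw [Finset.prod_inv_distrib, Finset.prod_pow_eq_pow_sum]
    congr 2
    clear this
    induction N with
    | zero => simp
    | succ n ih => rw [Finset.sum_range_succ, ih, Nat.choose_succ_succ' (n+1) 1]; simp; ring

theorem J_fin (q : ℂ) (hq : q ≠ 0) (hQ : ∀ n, JQ q n ≠ 0) (N : ℕ) :
    ∑ j ∈ Finset.range (N + 1), (2 * (j:ℂ) + 1) * (-1) ^ j * q ^ ((j+1).choose 2) *
      (JQ q (2*N+1) / (JQ q (N+1+j) * JQ q (N-j))) = JQ q N ^ 2 := by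
  have hx : (-(q^N)⁻¹) * q ^ N = -1 := by
    have : q ^ N ≠ 0 := pow_ne_zero _ hq
    field_simp
  have h := J_deriv q _ N hx
  rw [J_prod q hq] at h
  have hp : ∏ k ∈ Finset.range N, (1 + (-(q^N)⁻¹) * q ^ (N+1+k)) = JQ q N := by
    refine Finset.prod_congr rfl fun k _ => ?_
    rw [add_assoc N, pow_add, ← mul_assoc, hx, add_comm 1 k]; ring
  rw [hp, show 2 * N + 2 = (N+1) + (N+1) by ring, Finset.sum_range_add,
    ← Finset.sum_range_reflect, ← Finset.sum_add_distrib] at h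
  have hterm : ∀ k a : ℕ, k.choose 2 + (N+1).choose 2 = a + N * k →
      q ^ (k.choose 2) * (-(q^N)⁻¹) ^ k = (-1) ^ k * q ^ a * (q ^ ((N+1).choose 2))⁻¹ := by
    intro k a hk
    have h1 : q ^ ((N+1).choose 2) ≠ 0 := pow_ne_zero _ hq
    have h2 : q ^ (N * k) ≠ 0 := pow_ne_zero _ hq
    have h3 : q ^ (k.choose 2) * q ^ ((N+1).choose 2) = q ^ a * q ^ (N * k) := by
      rw [← pow_add, ← pow_add, hk]
    rw [neg_pow, inv_pow, ← pow_mul]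
    field_simp
    linear_combination h3
  have key : ∀ j ∈ Finset.range (N+1),
      (((N + 1 - 1 - j : ℕ):ℂ) - N - 1/2) * (q ^ ((N+1-1-j).choose 2) * Jgb q (2*N+1) (N+1-1-j) * (-(q^N)⁻¹) ^ (N+1-1-j))
      + (((N + 1 + j : ℕ):ℂ) - N - 1/2) * (q ^ ((N+1+j).choose 2) * Jgb q (2*N+1) (N+1+j) * (-(q^N)⁻¹) ^ (N+1+j))
      = (-1) ^ (N+1) * (q ^ ((N+1).choose 2))⁻¹ * ((2 * (j:ℂ) + 1) * (-1) ^ j * q ^ ((j+1).choose 2) *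
      (JQ q (2*N+1) / (JQ q (N+1+j) * JQ q (N-j)))) := by
    intro j hj
    obtain ⟨l, rfl⟩ : ∃ l, N = j + l := ⟨N - j, by have := Finset.mem_range.1 hj; omega⟩
    have e1 : j + l + 1 - 1 - j = l := by omega
    have e2 : j + l - j = l := by omega
    rw [e1, e2]
    have t1 := hterm l _ (J_choose2 l j)
    have t2 := hterm (j+l+1+j) _ (J_choose1 (j+l) j)
    have g1 : Jgb q (2*(j+l)+1) l = JQ q (2*(j+l)+1) / (JQ q (j+l+1+j) * JQ q l) := by
      rw [eq_div_iff (mul_ne_zero (hQ _) (hQ _))]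
      rw [← Jgb_mul q (2*(j+l)+1) l (j+l+1+j) (by ring)]; ring
    have g2 : Jgb q (2*(j+l)+1) (j+l+1+j) = JQ q (2*(j+l)+1) / (JQ q (j+l+1+j) * JQ q l) := by
      rw [eq_div_iff (mul_ne_zero (hQ _) (hQ _))]
      rw [← Jgb_mul q (2*(j+l)+1) (j+l+1+j) l (by ring)]; ring
    rw [g1, g2, mul_right_comm, mul_right_comm (q ^ ((j+l+1+j).choose 2)), t1, t2]
    have s1 : (-1:ℂ) ^ (j+l+1+j) = (-1)^(j+l+1) * (-1)^j := pow_add _ _ _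
    have s2 : (-1:ℂ) ^ l = - ((-1)^(j+l+1) * (-1)^j) := by
      rw [← pow_add, show j+l+1+j = l + 1 + 2*j by ring, pow_add, pow_mul]; simp [pow_succ]
    rw [s1, s2]
    push_cast
    ring
  rw [Finset.sum_congr rfl key, ← Finset.mul_sum] at h
  have h1 : (-1:ℂ) ^ (N+1) * (q ^ ((N+1).choose 2))⁻¹ ≠ 0 :=
    mul_ne_zero (pow_ne_zero _ (by norm_num)) (inv_ne_zero (pow_ne_zero _ hq))
  apply mul_left_cancel₀ h1
  rw [h]; ring

theorem J_main (q : ℂ) (hq : q ≠ 0) (hq1 : ‖q‖ < 1) :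
    Summable (fun j : ℕ => (2 * (j:ℂ) + 1) * (-1) ^ j * q ^ ((j+1).choose 2)) ∧
    ∑' j : ℕ, (2 * (j:ℂ) + 1) * (-1) ^ j * q ^ ((j+1).choose 2) =
      ∏' n : ℕ, (1 - q ^ (n+1)) ^ 3 := by
  have hmul : Multipliable (fun n : ℕ => 1 - q ^ (n+1)) := by
    have := multipliable_one_add_of_summable (f := fun n : ℕ => -q ^ (n+1)) (by
      simp only [norm_neg, norm_pow]
      exact (summable_nat_add_iff 1).2 (summable_geometric_of_lt_one (norm_nonneg _) hq1))
    simpa [sub_eq_add_neg] using this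
  have hne : ∀ n : ℕ, 1 - q ^ (n+1) ≠ 0 := by
    intro n h
    have h1 : ‖q ^ (n+1)‖ < 1 := by
      rw [norm_pow]; exact pow_lt_one₀ (norm_nonneg _) hq1 (by omega)
    rw [← sub_eq_zero.1 h] at h1
    simp at h1
  have hQ : ∀ n, JQ q n ≠ 0 := fun n => Finset.prod_ne_zero_iff.2 fun i _ => hne i
  have hsum : Summable (fun n : ℕ => ‖-q ^ (n+1)‖) := by
    simp only [norm_neg, norm_pow]
    exact (summable_nat_add_iff 1).2 (summable_geometric_of_lt_one (norm_nonneg _) hq1)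
  set P := ∏' n : ℕ, (1 - q ^ (n+1)) with hP
  have hP0 : P ≠ 0 := by
    have := tprod_one_add_ne_zero_of_summable (f := fun n : ℕ => -q ^ (n+1))
      (fun i => by simpa [sub_eq_add_neg] using hne i) hsum
    simpa [hP, sub_eq_add_neg] using this
  have hlim : Filter.Tendsto (JQ q) Filter.atTop (nhds P) := hmul.tendsto_prod_tprod_nat
  have hlimi := hlim.inv₀ hP0
  obtain ⟨C, hC⟩ := isBounded_iff_forall_norm_le.1 (Metric.isBounded_range_of_tendsto _ hlim)
  obtain ⟨D, hD⟩ := isBounded_iff_forall_norm_le.1 (Metric.isBounded_range_of_tendsto _ hlimi)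
  have hC : ∀ n, ‖JQ q n‖ ≤ C := fun n => hC _ ⟨n, rfl⟩
  have hD : ∀ n, ‖(JQ q n)⁻¹‖ ≤ D := fun n => hD _ ⟨n, rfl⟩
  have hC0 : 0 ≤ C := (norm_nonneg _).trans (hC 0)
  have hD0 : 0 ≤ D := (norm_nonneg _).trans (hD 0)
  set a : ℕ → ℂ := fun j => (2 * (j:ℂ) + 1) * (-1) ^ j * q ^ ((j+1).choose 2) with ha
  have hb : ∀ j, ‖a j‖ ≤ (2 * (j:ℝ) + 1) * ‖q‖ ^ j := by
    intro j
    have h1 : ‖(2 * (j:ℂ) + 1)‖ = 2 * (j:ℝ) + 1 := by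
      have : (2 * (j:ℂ) + 1) = ((2 * j + 1 : ℕ) : ℂ) := by push_cast; ring
      rw [this, Complex.norm_natCast]; push_cast; ring
    simp only [ha, norm_mul, norm_pow, norm_neg, norm_one, one_pow, mul_one, h1]
    have h2 : j ≤ (j+1).choose 2 := by rw [Nat.choose_succ_succ' j 1]; simp
    exact mul_le_mul_of_nonneg_left (pow_le_pow_of_le_one (norm_nonneg _) hq1.le h2) (by positivity)
  have hbs : Summable (fun j : ℕ => (2 * (j:ℝ) + 1) * ‖q‖ ^ j) := by
    have h1 := summable_pow_mul_geometric_of_norm_lt_one 1 (r := ‖q‖) (by simpa using hq1)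
    have h2 := summable_geometric_of_lt_one (norm_nonneg q) hq1
    refine ((h1.mul_left 2).add h2).congr fun j => ?_
    ring
  have has : Summable a := Summable.of_norm_bounded hbs hb
  refine ⟨has, ?_⟩
  rw [hmul.tprod_pow, ← hP]
  let f : ℕ → ℕ → ℂ := fun N j => if j < N + 1 then
    a j * (JQ q (2*N+1) / (JQ q (N+1+j) * JQ q (N-j))) else 0
  have hf : ∀ N, ∑' j, f N j = JQ q N ^ 2 := by
    intro N
    rw [tsum_eq_sum (s := Finset.range (N+1)), ← J_fin q hq hQ N]
    · refine Finset.sum_congr rfl fun j hj => ?_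
      simp only [f, if_pos (Finset.mem_range.1 hj), ha]
    · intro j hj
      simp only [f, if_neg (fun h => hj (Finset.mem_range.2 h))]
  have hT : Filter.Tendsto (fun N => ∑' j, f N j) Filter.atTop (nhds (∑' j, a j * (P / (P * P)))) := by
    refine tendsto_tsum_of_dominated_convergence
      (bound := fun j : ℕ => ((2 * (j:ℝ) + 1) * ‖q‖ ^ j) * (C * (D * D))) (hbs.mul_right _) ?_ ?_
    · intro j
      have l1 : Filter.Tendsto (fun N => JQ q (2*N+1)) Filter.atTop (nhds P) :=
        hlim.comp (Filter.tendsto_atTop_mono (fun N => (by omega : N ≤ 2*N+1)) Filter.tendsto_id)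
      have l2 : Filter.Tendsto (fun N => JQ q (N+1+j)) Filter.atTop (nhds P) :=
        hlim.comp (Filter.tendsto_atTop_mono (fun N => (by omega : N ≤ N+1+j)) Filter.tendsto_id)
      have l3 : Filter.Tendsto (fun N => JQ q (N-j)) Filter.atTop (nhds P) :=
        hlim.comp (Filter.tendsto_sub_atTop_nat j)
      refine ((l1.div (l2.mul l3) (mul_ne_zero hP0 hP0)).const_mul (a j)).congr' ?_
      filter_upwards [Filter.eventually_ge_atTop j] with N hN
      simp only [f, if_pos (Nat.lt_succ_of_le hN), Pi.div_apply]
    · refine Filter.Eventually.of_forall fun N j => ?_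
      simp only [f]
      split_ifs
      · rw [norm_mul (a j), div_eq_mul_inv, mul_inv, norm_mul (JQ q (2*N+1)), norm_mul (JQ q (N+1+j))⁻¹]
        exact mul_le_mul (hb j) (mul_le_mul (hC _) (mul_le_mul (hD _) (hD _) (norm_nonneg _) hD0)
          (by positivity) hC0) (by positivity) (by positivity)
      · rw [norm_zero]; positivity
  simp only [hf] at hT
  have := tendsto_nhds_unique hT (hlim.pow 2)
  rw [tsum_mul_right] at this
  field_simp at this
  exact this

theorem J_congr {f g : ℕ → ℂ} {a : ℂ} (h : ∀ j, f j = g j) : HasSum f a ↔ HasSum g a := by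
  rw [funext h]

theorem J_exp (j : ℕ) : Complex.exp (Real.pi * Complex.I * j) = (-1) ^ j := by
  rw [mul_comm, Complex.exp_nat_mul, Complex.exp_pi_mul_I]

theorem J_e_pos (τ : ℂ) (j : ℕ) : e (((j : ℂ) + 1/2)^2 / 2 * τ + ((j : ℂ) + 1/2) / 2) =
    Complex.I * (-1) ^ j * e (τ / 8) * e τ ^ ((j+1).choose 2) := by
  rw [← Complex.exp_pi_div_two_mul_I, ← J_exp]
  simp only [e, ← Complex.exp_nat_mul, ← Complex.exp_add]
  congr 1
  push_cast [Nat.cast_choose_two]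
  ring

theorem J_e_neg (τ : ℂ) (j : ℕ) : e ((-((j : ℂ) + 1/2))^2 / 2 * τ + (-((j : ℂ) + 1/2)) / 2) =
    - (Complex.I * (-1) ^ j * e (τ / 8) * e τ ^ ((j+1).choose 2)) := by
  have h : (-1:ℂ) ^ j = Complex.exp (-(Real.pi * Complex.I * j)) := by
    rw [Complex.exp_neg, J_exp, ← inv_pow]; norm_num
  have h2 : Complex.exp (-(Real.pi / 2 * Complex.I)) = - Complex.I := by
    rw [Complex.exp_neg, Complex.exp_pi_div_two_mul_I, Complex.inv_I]
  rw [h, ← neg_mul, ← neg_mul, ← neg_mul, ← h2]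
  simp only [e, ← Complex.exp_nat_mul, ← Complex.exp_add]
  congr 1
  push_cast [Nat.cast_choose_two]
  ring

/-- the product expansion `η³(τ) = q^{1/8} ∏_{n≥1} (1-qⁿ)³`. -/
theorem eta3_product (τ : ℂ) (hτ : 0 < τ.im) :
    eta3 τ = e (τ / 8) * ∏' n : ℕ, (1 - e ((n + 1 : ℂ) * τ))^3 := by
  have hq : e τ ≠ 0 := Complex.exp_ne_zero _
  have hq1 : ‖e τ‖ < 1 := by
    rw [e, Complex.norm_exp, Real.exp_lt_one_iff]
    have : (2 * (Real.pi : ℂ) * Complex.I * τ).re = - (2 * Real.pi * τ.im) := by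
      simp
    rw [this]
    have := Real.pi_pos
    have : 0 < 2 * Real.pi * τ.im := by positivity
    linarith
  obtain ⟨hs, ht⟩ := J_main (e τ) hq hq1
  have hprod : ∀ n : ℕ, e ((n + 1 : ℂ) * τ) = e τ ^ (n + 1) := by
    intro n
    simp only [e, ← Complex.exp_nat_mul]
    congr 1
    push_cast
    ring
  simp only [hprod]
  rw [← ht, eta3]
  have h1 := (hs.hasSum.mul_left (Complex.I * e (τ / 8) / 2))
  have h2 := HasSum.of_nat_of_neg_add_one (f := fun m : ℤ => ((m : ℂ) + 1/2) *
      e (((m : ℂ) + 1/2)^2 / 2 * τ + ((m : ℂ) + 1/2) / 2))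
    ((J_congr (fun j => by
      rw [Int.cast_natCast, J_e_pos]
      ring)).2 h1) ((J_congr (fun j => by
      have : (((-((j:ℤ) + 1) : ℤ) : ℂ) + 1/2) = -((j : ℂ) + 1/2) := by push_cast; ring
      rw [this, J_e_neg]
      ring)).2 h1)
  rw [h2.tsum_eq]
  linear_combination (-(e (τ / 8)) * ∑' j : ℕ, (2 * (j:ℂ) + 1) * (-1) ^ j * e τ ^ ((j+1).choose 2)) * Complex.I_sq
end

section
/- Define η³(τ) := −i ∑_{m ∈ ℤ+1/2} m · e(m²τ/2 + m/2) for τ ∈ H. Then for every τ ∈ H, (−iτ)^{-3/2} · η³(−1/τ) = η³(τ), where (−iτ)^{-3/2} is taken with the principal branch of the power (note Re(−iτ) > 0 for τ ∈ H). -/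
open Complex MeasureTheory
open scoped Classical

lemma theta_half (τ : ℂ) : jacobiTheta₂ ((τ + 1) / 2) τ = 0 := by
  have h1 := jacobiTheta₂_add_left' ((1 - τ) / 2) τ
  have h2 : jacobiTheta₂ ((1 - τ) / 2) τ = jacobiTheta₂ ((τ + 1) / 2) τ := by
    rw [← jacobiTheta₂_neg_left ((τ + 1) / 2), ← jacobiTheta₂_add_left (-((τ + 1) / 2))]
    congr 1
    ring
  have h3 : (1 - τ) / 2 + τ = (τ + 1) / 2 := by ring
  have h4 : -(Real.pi : ℂ) * I * (τ + 2 * ((1 - τ) / 2)) = -(Real.pi * I) := by ring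
  rw [h2, h3, h4, Complex.exp_neg, Complex.exp_pi_mul_I] at h1
  norm_num at h1
  linear_combination h1 / 2

lemma exp_half : cexp (Real.pi * I / 2) = I := by
  rw [show (Real.pi * I / 2 : ℂ) = Real.pi / 2 * I by ring, Complex.exp_pi_div_two_mul_I]

lemma eta3_eq (τ : ℂ) (hτ : 0 < τ.im) :
    eta3 τ = cexp (Real.pi * I * τ / 4) / (2 * Real.pi * I) * jacobiTheta₂' ((τ + 1) / 2) τ := by
  have hpi : (Real.pi : ℂ) ≠ 0 := by exact_mod_cast Real.pi_ne_zero
  have ht : ∀ m : ℤ, ((m : ℂ) + 1/2) * e (((m : ℂ) + 1/2)^2 / 2 * τ + ((m : ℂ) + 1/2) / 2)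
      = (cexp (Real.pi * I * τ / 4) * I / (2 * Real.pi * I)) *
          jacobiTheta₂'_term m ((τ + 1) / 2) τ
        + (cexp (Real.pi * I * τ / 4) * I / 2) * jacobiTheta₂_term m ((τ + 1) / 2) τ := by
    intro m
    have : e (((m : ℂ) + 1/2)^2 / 2 * τ + ((m : ℂ) + 1/2) / 2)
        = cexp (Real.pi * I * τ / 4) * I * jacobiTheta₂_term m ((τ + 1) / 2) τ := by
      have hk : cexp (Real.pi * I * τ / 4) * I
          = cexp (Real.pi * I * τ / 4) * cexp (Real.pi * I / 2) := by rw [exp_half]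
      rw [hk]
      rw [e, jacobiTheta₂_term, ← Complex.exp_add, ← Complex.exp_add]
      congr 1
      ring
    rw [this, jacobiTheta₂'_term]
    field_simp
  have hs := ((hasSum_jacobiTheta₂'_term ((τ + 1) / 2) hτ).mul_left
    (cexp (Real.pi * I * τ / 4) * I / (2 * Real.pi * I))).add
    ((hasSum_jacobiTheta₂_term ((τ + 1) / 2) hτ).mul_left (cexp (Real.pi * I * τ / 4) * I / 2))
  rw [eta3, tsum_congr ht, hs.tsum_eq, theta_half]
  linear_combination (-cexp (Real.pi * I * τ / 4) / (2 * Real.pi * I) *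
    jacobiTheta₂' ((τ + 1) / 2) τ) * I_sq

/-- the weight 3/2 transformation `(-iτ)^{-3/2} η³(-1/τ) = η³(τ)`. -/
theorem eta3_inversion (τ : ℂ) (hτ : 0 < τ.im) :
    ((-Complex.I * τ) ^ ((-3/2 : ℂ))) * eta3 (-1/τ) = eta3 τ := by
  have h0 : τ ≠ 0 := by
    rintro rfl
    simp at hτ
  have hτ' : 0 < (-1 / τ).im := by
    rw [div_eq_mul_inv, neg_one_mul, neg_im, inv_im, neg_div, neg_neg]
    exact div_pos hτ (normSq_pos.mpr h0)
  have hb : -I * τ ≠ 0 := by simp [h0]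
  have hz : (τ + 1) / 2 / τ = -((-1 / τ + 1) / 2) + 1 := by
    field_simp
    ring
  have hpow : (-I * τ) ^ (-3/2 : ℂ) = 1 / (-I * τ) ^ (1 / 2 : ℂ) * (I / τ) := by
    rw [show (-3/2 : ℂ) = -(1/2) + -1 by norm_num, cpow_add _ _ hb, cpow_neg, cpow_neg_one,
      one_div ((-I * τ) ^ (1 / 2 : ℂ))]
    congr 1
    rw [mul_inv, inv_neg, inv_I, neg_neg, div_eq_mul_inv]
  have hexp : cexp (Real.pi * I * τ / 4) * cexp (-Real.pi * I * ((τ + 1) / 2) ^ 2 / τ)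
      = -I * cexp (Real.pi * I * (-1 / τ) / 4) := by
    have : -I = cexp (-(Real.pi * I / 2)) := by rw [Complex.exp_neg, exp_half, inv_I]
    rw [this, ← Complex.exp_add, ← Complex.exp_add]
    congr 1
    field_simp
    ring
  rw [eta3_eq τ hτ, eta3_eq _ hτ', jacobiTheta₂'_functional_equation ((τ + 1) / 2) τ, hz, jacobiTheta₂_add_left,
    jacobiTheta₂_neg_left, theta_half, jacobiTheta₂'_add_left, jacobiTheta₂'_neg_left, hpow]
  linear_combination (1 / (-I * τ) ^ (1 / 2 : ℂ) / τ / (2 * Real.pi * I) *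
    jacobiTheta₂' ((-1 / τ + 1) / 2) (-1 / τ)) * hexp
end
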